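/- Let ε ∼ 𝒩(0, I_q), Δ > 0, and let g : ℝ^d → ℝ be L-Lipschitz. Define ℰ(x,u) = x + Δ b(x) + √Δ σ(x)u with b, σ Lipschitz, and Qg(x) = E[g(ℰ(x,ε)) ε] ∈ ℝ^q. Then Qg is Lipschitz with [Qg]_Lip ≤ √q · e^{ΔC} · L, where C = [b]_Lip + (1/2)([σ]²_Lip + Δ[b]²_Lip). -/

import Mathlib

open MeasureTheory ProbabilityTheory

/-- The one-step Euler map `ℰ(x,u) = x + Δ b(x) + √Δ σ(x) u`. -/
noncomputable def eulerMap {d q : ℕ} (Δ : ℝ)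
    (b : EuclideanSpace ℝ (Fin d) → EuclideanSpace ℝ (Fin d))
    (σ : EuclideanSpace ℝ (Fin d) → Matrix (Fin d) (Fin q) ℝ)
    (x : EuclideanSpace ℝ (Fin d)) (u : EuclideanSpace ℝ (Fin q)) :
    EuclideanSpace ℝ (Fin d) :=
  x + Δ • b x + Real.sqrt Δ •
    (WithLp.equiv 2 (Fin d → ℝ)).symm ((σ x).mulVec (WithLp.equiv 2 (Fin q → ℝ) u))

section Moments

variable {Ω : Type*} {mΩ : MeasurableSpace Ω} {P : Measure Ω}

theorem memLp_affine [IsFiniteMeasure P] {ι : Type*} [Fintype ι] {p : ENNReal} {X : ι → Ω → ℝ}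
    (hX : ∀ i, MemLp (X i) p P) (a : ℝ) (c : ι → ℝ) :
    MemLp (fun ω => a + ∑ i, c i * X i ω) p P := by
  have h : MemLp (fun ω => ∑ i, c i * X i ω) p P :=
    memLp_finsetSum _ fun i _ => (hX i).const_mul (c i)
  exact (memLp_const a).add h

/-- Second moment of an affine combination of orthonormal centred random variables. -/
theorem integral_sq_affine_of_orthonormal [IsProbabilityMeasure P] {ι : Type*} [Fintype ι]
    [DecidableEq ι] {X : ι → Ω → ℝ} (hX : ∀ i, MemLp (X i) 2 P) (hmean : ∀ i, ∫ ω, X i ω ∂P = 0)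
    (hcov : ∀ i j, ∫ ω, X i ω * X j ω ∂P = if i = j then 1 else 0) (a : ℝ) (c : ι → ℝ) :
    ∫ ω, (a + ∑ i, c i * X i ω) ^ 2 ∂P = a ^ 2 + ∑ i, c i ^ 2 := by
  have h_integrable : ∀ i, Integrable (X i) P := fun i => (hX i).integrable (by norm_num)
  have hmul : ∀ i j, Integrable (fun ω => X i ω * X j ω) P := fun i j =>
    (hX i).integrable_mul (hX j)
  have hexp : ∀ ω, (a + ∑ i, c i * X i ω) ^ 2
      = (a ^ 2 + ∑ i, (2 * a * c i) * X i ω) + ∑ i, ∑ j, (c i * c j) * (X i ω * X j ω) := by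
    intro ω
    rw [add_sq, sq (∑ i, c i * X i ω), Finset.sum_mul_sum, Finset.mul_sum]
    congr 1
    · congr 1
      exact Finset.sum_congr rfl fun i _ => by ring
    · exact Finset.sum_congr rfl fun i _ => Finset.sum_congr rfl fun j _ => by ring
  have h1 : Integrable (fun ω => ∑ i, (2 * a * c i) * X i ω) P :=
    integrable_finsetSum _ fun i _ => (h_integrable i).const_mul _
  have h2 : ∀ i, Integrable (fun ω => ∑ j, (c i * c j) * (X i ω * X j ω)) P := fun i =>
    integrable_finsetSum _ fun j _ => (hmul i j).const_mul _
  simp_rw [hexp]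
  have h3 : Integrable (fun ω => a ^ 2 + ∑ i, (2 * a * c i) * X i ω) P :=
    (integrable_const _).add h1
  rw [integral_add h3 (integrable_finsetSum _ fun i _ => h2 i),
    integral_add (integrable_const _) h1, integral_finsetSum _ fun i _ => (h_integrable i).const_mul _,
    integral_finsetSum _ fun i _ => h2 i]
  simp_rw [integral_finsetSum _ fun j _ => (hmul _ j).const_mul _, integral_const_mul, hmean, hcov]
  simp [sq]

theorem memLp_two_of_hasLaw_gaussianReal {X : Ω → ℝ} {m : ℝ} {v : NNReal}
    (hX : HasLaw X (gaussianReal m v) P) : MemLp X 2 P := by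
  have h := memLp_id_gaussianReal (μ := m) (v := v) 2
  rw [← hX.map_eq, memLp_map_measure_iff (by fun_prop) hX.aemeasurable] at h
  simpa using h

theorem integral_mul_of_iIndepFun_gaussianReal [IsProbabilityMeasure P] {ι : Type*}
    [DecidableEq ι] {X : ι → Ω → ℝ} (hX : ∀ i, HasLaw (X i) (gaussianReal 0 1) P)
    (hind : iIndepFun X P) (i j : ι) :
    ∫ ω, X i ω * X j ω ∂P = if i = j then 1 else 0 := by
  have hmean : ∀ i, ∫ ω, X i ω ∂P = 0 := fun i => by
    rw [(hX i).integral_eq, integral_id_gaussianReal]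
  split_ifs with h
  · subst h
    have hvar := (hX i).variance_eq
    rw [variance_id_gaussianReal,
      variance_eq_sub (memLp_two_of_hasLaw_gaussianReal (hX i)), hmean] at hvar
    simpa [sq] using hvar
  · rw [(hind.indepFun h).integral_fun_mul_eq_mul_integral
      (hX i).aemeasurable.aestronglyMeasurable (hX j).aemeasurable.aestronglyMeasurable,
      hmean, zero_mul]

/-- Cauchy–Schwarz for products of norms. -/
theorem integral_norm_mul_norm_le_sqrt_mul_sqrt {E F : Type*} [NormedAddCommGroup E]
    [NormedAddCommGroup F] {f : Ω → E} {g : Ω → F} (hf : MemLp f 2 P) (hg : MemLp g 2 P) :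
    ∫ ω, ‖f ω‖ * ‖g ω‖ ∂P ≤ √(∫ ω, ‖f ω‖ ^ 2 ∂P) * √(∫ ω, ‖g ω‖ ^ 2 ∂P) := by
  have h := integral_mul_le_Lp_mul_Lq_of_nonneg (μ := P) Real.HolderConjugate.two_two
    (f := fun ω => ‖f ω‖) (g := fun ω => ‖g ω‖)
    (Filter.Eventually.of_forall fun _ => norm_nonneg _)
    (Filter.Eventually.of_forall fun _ => norm_nonneg _)
    (by simpa using hf.norm) (by simpa using hg.norm)
  simpa [Real.sqrt_eq_rpow] using h

/-- A Lipschitz function of a square integrable vector is square integrable. -/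
theorem memLp_comp_of_abs_sub_le [IsFiniteMeasure P] {E : Type*} [NormedAddCommGroup E]
    {p : ENNReal} {f : Ω → E} (hf : MemLp f p P) {g : E → ℝ} {L : ℝ} (hL : 0 ≤ L)
    (hg : ∀ x x', |g x - g x'| ≤ L * ‖x - x'‖) : MemLp (fun ω => g (f ω)) p P := by
  have hlip : LipschitzWith ⟨L, hL⟩ g := LipschitzWith.of_dist_le_mul fun x y => by
    rw [Real.dist_eq, dist_eq_norm]
    exact hg x y
  have h : MemLp (fun ω => g (f ω) - g 0) p P :=
    hf.of_le_mul (c := L)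
      ((hlip.continuous.comp_aestronglyMeasurable hf.1).sub aestronglyMeasurable_const)
      (Filter.Eventually.of_forall fun ω => by simpa using hg (f ω) 0)
  exact (h.add (memLp_const (g 0))).congr_norm
    (hlip.continuous.comp_aestronglyMeasurable hf.1)
    (Filter.Eventually.of_forall fun ω => by simp)

end Moments

section EulerMap

variable {d q : ℕ} {Δ : ℝ} {b : EuclideanSpace ℝ (Fin d) → EuclideanSpace ℝ (Fin d)}
  {σ : EuclideanSpace ℝ (Fin d) → Matrix (Fin d) (Fin q) ℝ}

theorem eulerMap_apply (x : EuclideanSpace ℝ (Fin d)) (u : EuclideanSpace ℝ (Fin q)) (i : Fin d) :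
    eulerMap Δ b σ x u i = (x i + Δ * b x i) + ∑ j, (√Δ * σ x i j) * u j := by
  simp [eulerMap, Matrix.mulVec, dotProduct, Finset.mul_sum, mul_assoc]

theorem eulerMap_sub_apply (x x' : EuclideanSpace ℝ (Fin d)) (u : EuclideanSpace ℝ (Fin q))
    (i : Fin d) :
    (eulerMap Δ b σ x u - eulerMap Δ b σ x' u) i
      = (x - x' + Δ • (b x - b x')) i + ∑ j, (√Δ * (σ x i j - σ x' i j)) * u j := by
  simp only [PiLp.sub_apply, PiLp.add_apply, PiLp.smul_apply, smul_eq_mul, eulerMap_apply, mul_sub,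
    sub_mul, Finset.sum_sub_distrib]
  ring

variable {Ω : Type*} {mΩ : MeasurableSpace Ω} {P : Measure Ω} [IsProbabilityMeasure P]
  {ε : Ω → EuclideanSpace ℝ (Fin q)}

theorem memLp_eulerMap (hε : ∀ j, MemLp (fun ω => ε ω j) 2 P) (x : EuclideanSpace ℝ (Fin d)) :
    MemLp (fun ω => eulerMap Δ b σ x (ε ω)) 2 P := by
  refine MemLp.of_eval_piLp fun i => ?_
  simp_rw [eulerMap_apply]
  exact memLp_affine hε _ _

theorem integral_norm_eulerMap_sub_sq (hΔ : 0 ≤ Δ) (hε : ∀ j, MemLp (fun ω => ε ω j) 2 P)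
    (hmean : ∀ j, ∫ ω, ε ω j ∂P = 0)
    (hcov : ∀ i j, ∫ ω, ε ω i * ε ω j ∂P = if i = j then 1 else 0)
    (x x' : EuclideanSpace ℝ (Fin d)) :
    ∫ ω, ‖eulerMap Δ b σ x (ε ω) - eulerMap Δ b σ x' (ε ω)‖ ^ 2 ∂P
      = ‖x - x' + Δ • (b x - b x')‖ ^ 2 + Δ * ∑ i, ∑ j, (σ x i j - σ x' i j) ^ 2 := by
  simp_rw [EuclideanSpace.real_norm_sq_eq, eulerMap_sub_apply]
  rw [integral_finsetSum]
  · simp_rw [integral_sq_affine_of_orthonormal hε hmean hcov, Finset.sum_add_distrib,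
      mul_pow, Real.sq_sqrt hΔ, ← Finset.mul_sum]
  · exact fun i _ => (memLp_affine hε _ _).integrable_sq

/-- The Euler map is Lipschitz in `L²` with constant `e^{ΔC}`. -/
theorem sqrt_integral_norm_eulerMap_sub_sq_le (hΔ : 0 ≤ Δ) {Kb Kσ : ℝ}
    (hb : ∀ x x', ‖b x - b x'‖ ≤ Kb * ‖x - x'‖)
    (hσ : ∀ x x', √(∑ i, ∑ j, (σ x i j - σ x' i j) ^ 2) ≤ Kσ * ‖x - x'‖)
    (hε : ∀ j, MemLp (fun ω => ε ω j) 2 P)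
    (hmean : ∀ j, ∫ ω, ε ω j ∂P = 0)
    (hcov : ∀ i j, ∫ ω, ε ω i * ε ω j ∂P = if i = j then 1 else 0)
    (x x' : EuclideanSpace ℝ (Fin d)) :
    √(∫ ω, ‖eulerMap Δ b σ x (ε ω) - eulerMap Δ b σ x' (ε ω)‖ ^ 2 ∂P)
      ≤ Real.exp (Δ * (Kb + (Kσ ^ 2 + Δ * Kb ^ 2) / 2)) * ‖x - x'‖ := by
  rw [integral_norm_eulerMap_sub_sq hΔ hε hmean hcov]
  refine Real.sqrt_le_iff.2 ⟨by positivity, ?_⟩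
  have hdrift : ‖x - x' + Δ • (b x - b x')‖ ≤ (1 + Δ * Kb) * ‖x - x'‖ := by
    calc ‖x - x' + Δ • (b x - b x')‖ ≤ ‖x - x'‖ + Δ * ‖b x - b x'‖ := by
          simpa [norm_smul, abs_of_nonneg hΔ] using norm_add_le (x - x') (Δ • (b x - b x'))
      _ ≤ ‖x - x'‖ + Δ * (Kb * ‖x - x'‖) := by gcongr; exact hb x x'
      _ = (1 + Δ * Kb) * ‖x - x'‖ := by ring
  have hdiff : ∑ i, ∑ j, (σ x i j - σ x' i j) ^ 2 ≤ (Kσ * ‖x - x'‖) ^ 2 :=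
    (Real.sqrt_le_iff.1 (hσ x x')).2
  calc _ ≤ ((1 + Δ * Kb) * ‖x - x'‖) ^ 2 + Δ * (Kσ * ‖x - x'‖) ^ 2 := by gcongr
    _ = (2 * (Δ * (Kb + (Kσ ^ 2 + Δ * Kb ^ 2) / 2)) + 1) * ‖x - x'‖ ^ 2 := by ring
    _ ≤ Real.exp (2 * (Δ * (Kb + (Kσ ^ 2 + Δ * Kb ^ 2) / 2))) * ‖x - x'‖ ^ 2 := by
        gcongr
        exact Real.add_one_le_exp _
    _ = _ := by rw [mul_pow, ← Real.exp_nat_mul]; norm_num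

end EulerMap

/-- The operator `Qg(x) = E[g(ℰ(x,ε)) ε] ∈ ℝ^q` is Lipschitz with
`[Qg]_Lip ≤ √q e^{ΔC} L` when `g` is `L`-Lipschitz, where
`C = [b]_Lip + ([σ]²_Lip + Δ[b]²_Lip)/2`. -/
theorem stmt5 {Ω : Type*} {mΩ : MeasurableSpace Ω} (P : Measure Ω) [IsProbabilityMeasure P]
    {d q : ℕ} (Δ : ℝ) (hΔ : 0 < Δ)
    (b : EuclideanSpace ℝ (Fin d) → EuclideanSpace ℝ (Fin d))
    (σ : EuclideanSpace ℝ (Fin d) → Matrix (Fin d) (Fin q) ℝ)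
    (Kb Kσ : ℝ) (hKb : 0 ≤ Kb) (hKσ : 0 ≤ Kσ)
    (hb : ∀ x x', ‖b x - b x'‖ ≤ Kb * ‖x - x'‖)
    (hσ : ∀ x x', Real.sqrt (∑ i, ∑ j, (σ x i j - σ x' i j) ^ 2) ≤ Kσ * ‖x - x'‖)
    (ε : Ω → EuclideanSpace ℝ (Fin q)) (hεmeas : Measurable ε)
    (hεlaw : Measure.map (fun ω => WithLp.equiv 2 (Fin q → ℝ) (ε ω)) P
      = Measure.pi fun _ : Fin q => gaussianReal 0 1)
    (g : EuclideanSpace ℝ (Fin d) → ℝ) (L : ℝ) (hL : 0 ≤ L)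
    (hg : ∀ x x', |g x - g x'| ≤ L * ‖x - x'‖) :
    ∀ x x' : EuclideanSpace ℝ (Fin d),
      ‖(∫ ω, g (eulerMap Δ b σ x (ε ω)) • ε ω ∂P)
          - ∫ ω, g (eulerMap Δ b σ x' (ε ω)) • ε ω ∂P‖
        ≤ Real.sqrt q * Real.exp (Δ * (Kb + (Kσ ^ 2 + Δ * Kb ^ 2) / 2)) * L * ‖x - x'‖ := by
  have hofLp : Measurable fun ω => WithLp.equiv 2 (Fin q → ℝ) (ε ω) :=
    (WithLp.measurable_ofLp _ _).comp hεmeas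
  have hX : ∀ j, HasLaw (fun ω => ε ω j) (gaussianReal 0 1) P := fun j =>
    ⟨by fun_prop, by
      rw [← (measurePreserving_eval (fun _ : Fin q => gaussianReal 0 1) j).map_eq, ← hεlaw,
        Measure.map_map (measurable_pi_apply j) hofLp]
      rfl⟩
  have hind : iIndepFun (fun j ω => ε ω j) P := by
    rw [iIndepFun_iff_map_fun_eq_pi_map fun j => (hX j).aemeasurable]
    simp_rw [(hX _).map_eq]
    exact hεlaw
  have hcoord := fun j => memLp_two_of_hasLaw_gaussianReal (hX j)
  have hmean : ∀ j, ∫ ω, ε ω j ∂P = 0 := fun j => by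
    rw [(hX j).integral_eq, integral_id_gaussianReal]
  have hcov := integral_mul_of_iIndepFun_gaussianReal hX hind
  have hε : MemLp ε 2 P := MemLp.of_eval_piLp hcoord
  have hεsq : ∫ ω, ‖ε ω‖ ^ 2 ∂P = q := by
    simp_rw [EuclideanSpace.real_norm_sq_eq]
    rw [integral_finsetSum _ fun j _ => (hcoord j).integrable_sq]
    simp [sq, hcov]
  intro x x'
  have hE : ∀ y, MemLp (fun ω => eulerMap Δ b σ y (ε ω)) 2 P := memLp_eulerMap hcoord
  have h_integrable : ∀ y, Integrable (fun ω => g (eulerMap Δ b σ y (ε ω)) • ε ω) P := fun y =>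
    memLp_one_iff_integrable.1 (hε.smul (memLp_comp_of_abs_sub_le (hE y) hL hg))
  have hD : MemLp (fun ω => eulerMap Δ b σ x (ε ω) - eulerMap Δ b σ x' (ε ω)) 2 P :=
    (hE x).sub (hE x')
  rw [← integral_sub (h_integrable x) (h_integrable x')]
  calc _ ≤ ∫ ω, L * (‖eulerMap Δ b σ x (ε ω) - eulerMap Δ b σ x' (ε ω)‖ * ‖ε ω‖) ∂P := by
        refine norm_integral_le_of_norm_le ((hD.norm.integrable_mul hε.norm).const_mul L)
          (Filter.Eventually.of_forall fun ω => ?_)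
        rw [← sub_smul, norm_smul, ← mul_assoc]
        exact mul_le_mul_of_nonneg_right (hg _ _) (norm_nonneg _)
    _ ≤ L * (√(∫ ω, ‖eulerMap Δ b σ x (ε ω) - eulerMap Δ b σ x' (ε ω)‖ ^ 2 ∂P)
          * √(∫ ω, ‖ε ω‖ ^ 2 ∂P)) := by
        rw [integral_const_mul]
        gcongr
        exact integral_norm_mul_norm_le_sqrt_mul_sqrt hD hε
    _ ≤ L * ((Real.exp (Δ * (Kb + (Kσ ^ 2 + Δ * Kb ^ 2) / 2)) * ‖x - x'‖) * √q) := by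
        rw [hεsq]
        gcongr
        exact sqrt_integral_norm_eulerMap_sub_sq_le hΔ.le hb hσ hcoord hmean hcov x x'
    _ = _ := by ring
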